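/- Let k ≥ 1 and let f be a real-valued function of class C^k on an open neighbourhood of the closed unit disk D ⊂ ℝ². Then there exists a sequence of polynomials (Q_d)_{d≥1} on ℝ² with deg Q_d ≤ d such that d^{k−1} · sup_{x∈D} |f(x) − Q_d(x)| → 0 and d^{k−1} · sup_{x∈D} ‖Df(x) − DQ_d(x)‖ → 0 as d → ∞, where ‖Df(x) − DQ_d(x)‖ = √((∂₁f(x)−∂₁Q_d(x))² + (∂₂f(x)−∂₂Q_d(x))²). -/

import Mathlib

open Finset

/-!
The approximation is by a higher-order Jackson-type smoothing whose kernel is itself a polynomial.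

Multiplying by a bump function, `f` may be replaced by a compactly supported `F` of class `C^k`,
vanishing where `‖y‖ ≥ 2` and equal to `f` near the disk. Write `m = k - 1`. Given a probability
weight `w` on the ball of radius `4`, `smoothing w (m + 1) F` averages
`F x - (-1) ^ (m + 1) Δ_t ^ (m + 1) F x` over `t`. This operation is linear and commutes with
differentiation, so both required estimates follow from a single one, applied to `F` and to
`fderiv ℝ F`, both of class `C^m`.

* Error: a `C^m` function `G` with compact support satisfies
  `‖Δ_t ^ (m + 1) G‖ ≤ ε ‖t‖ ^ m + C ‖t‖ ^ (m + 1)` for every `ε > 0`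
  (`norm_fwdDiff_iter_le`). If the `j`-th moments of `w` are `O(N ^ (-j))` for `j ≤ m + 1`, the
  error of the smoothing is therefore `o(N ^ (-m))` (`norm_sub_smoothing_le`).
* Kernel: such weights exist of the form `t ↦ p (‖t‖ ^ 2 / 16)` with `p` a polynomial of degree
  `O(N)`, namely a normalised power of the Fejér polynomial `q` determined by
  `q (sin² θ) = sin² (N θ) / sin² θ` (`exists_kernel`).
* Polynomiality: for `‖x‖ ≤ 2` the truncation of the weight to the ball is invisible, since
  `F (x + i t) = 0` as soon as `‖t‖ > 4` and `i ≥ 1`. Substituting `y = x + i t` turns each term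
  into `∫ F y * p (c ‖y - x‖ ^ 2)`, a polynomial in `x` of degree at most twice that of `p`
  (`exists_mvPolynomial_smoothing`).
-/

/-! ### Finite differences -/

lemma hasFDerivAt_fwdDiff_iter {E : Type} [NormedAddCommGroup E] [NormedSpace ℝ E]
    {G : ℂ → E} (hG : ContDiff ℝ 1 G) (t : ℂ) (n : ℕ) (x : ℂ) :
    HasFDerivAt ((fwdDiff t)^[n] G) ((fwdDiff t)^[n] (fderiv ℝ G) x) x := by
  induction n generalizing x with
  | zero => exact (hG.differentiable one_ne_zero x).hasFDerivAt
  | succ n ih =>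
    rw [Function.iterate_succ_apply', Function.iterate_succ_apply']
    exact ((hasFDerivAt_comp_add_right t).2 (ih (x + t))).sub (ih x)

/-- The differences of order `m + 1` of a compactly supported `C^m` function are `o(‖t‖ ^ m)`,
uniformly in the base point. Bounded uniform continuity gives `m = 0`; the mean value inequality
applied to `Δ_t ^ (m + 1) G`, whose derivative is `Δ_t ^ (m + 1) (fderiv ℝ G)`, gives the inductive
step. The codomain varies because the induction passes from `G` to `fderiv ℝ G`. -/
lemma norm_fwdDiff_iter_le (m : ℕ) : ∀ {E : Type} [NormedAddCommGroup E] [NormedSpace ℝ E]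
    {G : ℂ → E}, ContDiff ℝ m G → HasCompactSupport G → ∀ ε > (0 : ℝ),
    ∃ C ≥ (0 : ℝ), ∀ t x : ℂ,
      ‖(fwdDiff t)^[m + 1] G x‖ ≤ ε * ‖t‖ ^ m + C * ‖t‖ ^ (m + 1) := by
  induction m with
  | zero =>
    intro E _ _ G hG hc ε hε
    obtain ⟨B, hB⟩ := hc.exists_bound_of_continuous hG.continuous
    obtain ⟨δ, hδ, hu⟩ := Metric.uniformContinuous_iff.1
      (hc.uniformContinuous_of_continuous hG.continuous) ε hε
    have hB0 : 0 ≤ B := (norm_nonneg _).trans (hB 0)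
    refine ⟨2 * B / δ, by positivity, fun t x => ?_⟩
    simp only [zero_add, Function.iterate_one, pow_zero, mul_one, pow_one, fwdDiff]
    rcases lt_or_ge ‖t‖ δ with h | h
    · have := hu (a := x + t) (b := x) (by simpa [dist_eq_norm] using h)
      rw [dist_eq_norm] at this
      have h2 : 0 ≤ 2 * B / δ * ‖t‖ := by positivity
      linarith
    · have h1 : ‖G (x + t) - G x‖ ≤ 2 * B :=
        (norm_sub_le _ _).trans (by linarith [hB (x + t), hB x])
      have h2 : 2 * B ≤ 2 * B / δ * ‖t‖ := by
        rw [div_mul_eq_mul_div, le_div_iff₀ hδ]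
        gcongr
      linarith
  | succ m ih =>
    intro E _ _ G hG hc ε hε
    have hG' : ContDiff ℝ m (fderiv ℝ G) := hG.fderiv_right (by norm_cast)
    obtain ⟨C, hC, hb⟩ := ih hG' (hc.fderiv ℝ) ε hε
    refine ⟨C, hC, fun t x => ?_⟩
    rw [Function.iterate_succ_apply']
    have h1 : ContDiff ℝ 1 G := hG.of_le (by norm_cast; omega)
    have := Convex.norm_image_sub_le_of_norm_hasFDerivWithin_le (s := Set.univ)
      (fun y _ => (hasFDerivAt_fwdDiff_iter h1 t (m + 1) y).hasFDerivWithinAt)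
      (fun y _ => hb t y) convex_univ (Set.mem_univ x) (Set.mem_univ (x + t))
    rw [add_sub_cancel_left] at this
    refine this.trans (le_of_eq ?_)
    ring

/-! ### Polynomial kernels -/

open Polynomial in
/-- The Fejér kernel as a polynomial in `u = sin² θ`: it is `(1 - T_N (1 - 2 u)) / (2 u)`, where
`1 - 2 u = cos (2 θ)` and `1 - T_N (1 - 2 u) = 1 - cos (2 N θ) = 2 sin² (N θ)`. -/
lemma exists_fejer (N : ℕ) : ∃ q : ℝ[X], q.natDegree ≤ N ∧
    ∀ θ : ℝ, q.eval (Real.sin θ ^ 2) * Real.sin θ ^ 2 = Real.sin (N * θ) ^ 2 := by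
  set r : ℝ[X] := C (1 / 2) * (1 - (Chebyshev.T ℝ N).comp (1 - 2 * X)) with hr
  have h0 : r.coeff 0 = 0 := by
    rw [coeff_zero_eq_eval_zero]
    simp [hr]
  refine ⟨r.divX, natDegree_divX_le.trans ?_, fun θ => ?_⟩
  · have h1 : (1 - 2 * X : ℝ[X]).natDegree ≤ 1 := by compute_degree
    have h2 : ((Chebyshev.T ℝ N).comp (1 - 2 * X)).natDegree ≤ N := by
      refine natDegree_comp_le.trans ?_
      rw [Chebyshev.natDegree_T, Int.natAbs_natCast]
      exact (Nat.mul_le_mul_left _ h1).trans (by simp)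
    refine (natDegree_C_mul_le _ _).trans ((natDegree_sub_le _ _).trans ?_)
    simp [h2]
  · have h := congrArg (eval (Real.sin θ ^ 2)) (divX_mul_X_add r)
    rw [h0, C_0, add_zero, eval_mul, eval_X] at h
    rw [h, hr]
    have h3 : 1 - 2 * Real.sin θ ^ 2 = Real.cos (2 * θ) := by
      rw [Real.cos_two_mul, Real.cos_sq']; ring
    simp only [eval_mul, eval_C, eval_sub, eval_one, eval_comp, eval_ofNat, eval_X]
    rw [h3, Chebyshev.T_real_cos]
    have h4 : ((N : ℤ) : ℝ) * (2 * θ) = 2 * (N * θ) := by push_cast; ring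
    rw [h4, Real.cos_two_mul, Real.cos_sq']; ring

lemma abs_sin_nat_mul_le (N : ℕ) (θ : ℝ) : |Real.sin (N * θ)| ≤ N * |Real.sin θ| := by
  induction N with
  | zero => simp
  | succ N ih =>
    have h : ((N + 1 : ℕ) : ℝ) * θ = N * θ + θ := by push_cast; ring
    rw [h, Real.sin_add]
    refine (abs_add_le _ _).trans ?_
    rw [abs_mul, abs_mul]
    have h1 := mul_le_mul_of_nonneg_left (Real.abs_cos_le_one θ) (abs_nonneg (Real.sin (N * θ)))
    have h2 := mul_le_mul_of_nonneg_right (Real.abs_cos_le_one (N * θ)) (abs_nonneg (Real.sin θ))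
    push_cast
    linarith

open Polynomial in
/-- Size of the Fejér polynomial on `(0, 1]`: at most of order `min (N ^ 2) (1 / u)`, and at least
of order `N ^ 2` for `u ≤ 1 / N ^ 2`. -/
lemma exists_fejer_bounds {N : ℕ} (hN : 1 ≤ N) : ∃ q : ℝ[X], q.natDegree ≤ N ∧
    ∀ u : ℝ, 0 < u → u ≤ 1 → 0 ≤ q.eval u ∧ q.eval u * (1 + N ^ 2 * u) ≤ 2 * N ^ 2 ∧
      (N ^ 2 * u ≤ 1 → (N : ℝ) ^ 2 / 4 ≤ q.eval u) := by
  obtain ⟨q, hq, hs⟩ := exists_fejer N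
  refine ⟨q, hq, fun u hu0 hu1 => ?_⟩
  have hN' : (1 : ℝ) ≤ N := by exact_mod_cast hN
  set s := √u with hsdef
  have hs0 : 0 < s := Real.sqrt_pos.2 hu0
  have hsu : s ^ 2 = u := Real.sq_sqrt hu0.le
  have hs1 : s ≤ 1 := Real.sqrt_le_one.2 hu1
  set θ := Real.arcsin s with hθ
  have hsin : Real.sin θ = s := Real.sin_arcsin (by linarith) hs1
  have hθ0 : 0 ≤ θ := Real.arcsin_nonneg.2 hs0.le
  have hθ2 : θ ≤ Real.pi / 2 := Real.arcsin_le_pi_div_two s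
  have key := hs θ
  rw [hsin, hsu] at key
  have hA : q.eval u * u ≤ 1 := key.trans_le (Real.sin_sq_le_one _)
  have hB : q.eval u ≤ N ^ 2 := by
    have h := abs_sin_nat_mul_le N θ
    rw [hsin, abs_of_pos hs0] at h
    have h' := pow_le_pow_left₀ (abs_nonneg _) h 2
    rw [sq_abs, mul_pow, hsu, ← key] at h'
    exact le_of_mul_le_mul_right h' hu0
  refine ⟨?_, by nlinarith [sq_nonneg (N : ℝ)], fun hNu => ?_⟩
  · by_contra! h
    nlinarith [sq_nonneg (Real.sin (N * θ))]
  · have hpi := Real.pi_pos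
    have h1 : 2 / Real.pi * θ ≤ s := hsin ▸ Real.mul_le_sin hθ0 hθ2
    have h2 : N * s ≤ 1 := by
      rw [← hsu, ← mul_pow] at hNu
      exact (pow_le_one_iff_of_nonneg (by positivity) two_ne_zero).1 hNu
    have h3 : N * θ ≤ Real.pi / 2 := by
      have : N * (2 / Real.pi * θ) ≤ 1 := (by gcongr : _ ≤ N * s).trans h2
      rw [le_div_iff₀ two_pos]
      calc N * θ * 2 = N * (2 / Real.pi * θ) * Real.pi := by field_simp
        _ ≤ 1 * Real.pi := by gcongr
        _ = _ := one_mul _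
    have h4 := Real.mul_le_sin (by positivity) h3
    have h5 : s ≤ θ := hsin ▸ Real.sin_le hθ0
    have h6 : (1 / 2 : ℝ) ≤ 2 / Real.pi := by
      rw [div_le_div_iff₀ two_pos hpi]; linarith [Real.pi_le_four]
    have h7 : 1 / 2 * (N * s) ≤ Real.sin (N * θ) :=
      (by gcongr : _ ≤ 2 / Real.pi * (N * θ)).trans h4
    have h8 := pow_le_pow_left₀ (by positivity) h7 2
    rw [← key, mul_pow, mul_pow, hsu] at h8
    refine le_of_mul_le_mul_right ?_ hu0
    linarith

open MeasureTheory in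
lemma integrable_pow_div (j M : ℕ) (h : j + 2 ≤ M) :
    Integrable (fun v : ℂ => ‖v‖ ^ j / (1 + ‖v‖ ^ 2) ^ M) := by
  have h4 := integrable_rpow_neg_one_add_norm_sq (E := ℂ) (μ := volume) (r := 4)
    (by rw [Complex.finrank_real_complex]; norm_num)
  refine h4.mono' ?_ (Filter.Eventually.of_forall fun v => ?_)
  · refine Continuous.aestronglyMeasurable (Continuous.div (by fun_prop) (by fun_prop) fun v => ?_)
    positivity
  · have h1 : (1 : ℝ) ≤ 1 + ‖v‖ ^ 2 := by nlinarith [sq_nonneg ‖v‖]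
    have h0 : 0 < 1 + ‖v‖ ^ 2 := by positivity
    have e : (-4 / 2 : ℝ) = -((2 : ℕ) : ℝ) := by norm_num
    rw [Real.norm_of_nonneg (by positivity), e, Real.rpow_neg h0.le, Real.rpow_natCast,
      ← one_div, div_le_div_iff₀ (by positivity) (by positivity), one_mul]
    have h2 : ‖v‖ ≤ 1 + ‖v‖ ^ 2 := by nlinarith [sq_nonneg (‖v‖ - 1)]
    calc ‖v‖ ^ j * (1 + ‖v‖ ^ 2) ^ 2 ≤ (1 + ‖v‖ ^ 2) ^ j * (1 + ‖v‖ ^ 2) ^ 2 := by gcongr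
      _ = (1 + ‖v‖ ^ 2) ^ (j + 2) := by rw [pow_add]
      _ ≤ _ := pow_le_pow_right₀ h1 h

open MeasureTheory Polynomial in
/-- Polynomial approximate identities in `‖t‖ ^ 2` of degree `O(N)`, whose moments have the
optimal size `O(N ^ (-j))` up to the prescribed order `J`. The kernel is the normalised `M`-th power
of the Fejér polynomial. The exponent `M = 2 (J + 2)` makes `‖v‖ ^ J / (1 + ‖v‖ ^ 2) ^ M`
integrable on the plane, and being even it makes the kernel nonnegative everywhere. -/
lemma exists_kernel (J : ℕ) : ∃ C > (0 : ℝ), ∃ M > 0, ∀ N : ℕ, 1 ≤ N → ∃ p : ℝ[X],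
    p.natDegree ≤ M * N ∧ (∀ u, 0 ≤ p.eval u) ∧
    ∫ t in Metric.closedBall (0 : ℂ) 4, p.eval (‖t‖ ^ 2 / 16) = 1 ∧
    ∀ j ≤ J, ∫ t in Metric.closedBall (0 : ℂ) 4, p.eval (‖t‖ ^ 2 / 16) * ‖t‖ ^ j ≤ C / N ^ j := by
  set M := 2 * (J + 2) with hM
  set H : ℕ → ℝ := fun j => ∫ v : ℂ, ‖v‖ ^ j / (1 + ‖v‖ ^ 2) ^ M with hH
  have hH0 : ∀ j, 0 ≤ H j := fun j => integral_nonneg fun v => by positivity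
  obtain ⟨S, hS⟩ : ∃ S, S = ∑ j ∈ range (J + 1), 8 ^ M * 4 ^ j * H j := ⟨_, rfl⟩
  have hS0 : 0 ≤ S := hS ▸ sum_nonneg fun j _ => mul_nonneg (by positivity) (hH0 j)
  refine ⟨S + 1, by linarith, M, by omega, fun N hN => ?_⟩
  obtain ⟨q, hq, hb⟩ := exists_fejer_bounds hN
  have hN0 : (0 : ℝ) < N := by exact_mod_cast hN
  have hqM : ∀ u, 0 ≤ q.eval u ^ M := fun u => by
    rw [hM, pow_mul]; positivity
  have hcont : Continuous fun t : ℂ => q.eval (‖t‖ ^ 2 / 16) ^ M :=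
    (q.continuous.comp (by fun_prop : Continuous fun t : ℂ => ‖t‖ ^ 2 / 16)).pow M
  have hae : ∀ᵐ t : ℂ, t ≠ 0 := by
    exact (Set.finite_singleton (0 : ℂ)).measure_zero volume |> compl_mem_ae_iff.2
  have hu : ∀ t : ℂ, t ≠ 0 → 0 < ‖t‖ ^ 2 / 16 := fun t ht => by positivity
  have hu1 : ∀ t : ℂ, t ∈ Metric.closedBall (0 : ℂ) 4 → ‖t‖ ^ 2 / 16 ≤ 1 := fun t ht => by
    rw [mem_closedBall_zero_iff] at ht
    nlinarith [norm_nonneg t]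
  have hint : ∀ j : ℕ, IntegrableOn (fun t : ℂ => q.eval (‖t‖ ^ 2 / 16) ^ M * ‖t‖ ^ j)
      (Metric.closedBall (0 : ℂ) 4) := fun j =>
    (hcont.mul (by fun_prop)).continuousOn.integrableOn_compact (isCompact_closedBall 0 4)
  set I := ∫ t in Metric.closedBall (0 : ℂ) 4, q.eval (‖t‖ ^ 2 / 16) ^ M with hI
  -- lower bound for the total mass, from the ball of radius `4 / N`
  have hlow : ((N : ℝ) ^ 2 / 4) ^ M * (4 / N) ^ 2 ≤ I := by
    have hsub : Metric.closedBall (0 : ℂ) (4 / N) ⊆ Metric.closedBall 0 4 := by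
      apply Metric.closedBall_subset_closedBall
      rw [div_le_iff₀ hN0]
      have : (1 : ℝ) ≤ N := by exact_mod_cast hN
      linarith
    have h0 : IntegrableOn (fun t : ℂ => q.eval (‖t‖ ^ 2 / 16) ^ M)
      (Metric.closedBall (0 : ℂ) 4) := by simpa using hint 0
    have h1 : ∫ t in Metric.closedBall (0 : ℂ) (4 / N), ((N : ℝ) ^ 2 / 4) ^ M ≤ I := by
      refine le_trans ?_ (setIntegral_mono_set h0 (Filter.Eventually.of_forall fun t => hqM _)
        hsub.eventuallyLE)
      refine setIntegral_mono_on_ae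
        (continuousOn_const.integrableOn_compact (isCompact_closedBall _ _)) (h0.mono_set hsub) measurableSet_closedBall ?_
      filter_upwards [hae] with t ht htb
      have h2 := (hb _ (hu t ht) (hu1 t (hsub htb))).2.2 ?_
      · gcongr
      · rw [mem_closedBall_zero_iff, le_div_iff₀ hN0] at htb
        have : (‖t‖ * N) ^ 2 ≤ 4 ^ 2 := by gcongr
        linarith
    refine le_trans ?_ h1
    rw [setIntegral_const, smul_eq_mul, mul_comm]
    gcongr
    rw [Measure.real, Complex.volume_closedBall, ENNReal.toReal_mul, ENNReal.toReal_pow,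
      ENNReal.toReal_ofReal (by positivity)]
    have : (1 : ℝ) ≤ (NNReal.pi : ENNReal).toReal := by
      simp only [ENNReal.coe_toReal, NNReal.coe_real_pi]
      linarith [Real.pi_gt_three]
    exact le_mul_of_one_le_right (by positivity) this
  have hIpos : 0 < I := lt_of_lt_of_le (by positivity) hlow
  refine ⟨C I⁻¹ * q ^ M, ?_, fun u => ?_, ?_, fun j hj => ?_⟩
  · refine (natDegree_C_mul_le _ _).trans (natDegree_pow_le.trans ?_)
    gcongr
  · rw [eval_mul, eval_C, eval_pow]
    exact mul_nonneg (by positivity) (hqM u)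
  · simp only [eval_mul, eval_C, eval_pow]
    rw [integral_const_mul, ← hI, inv_mul_cancel₀ hIpos.ne']
  · simp only [eval_mul, eval_C, eval_pow, mul_assoc]
    rw [integral_const_mul, inv_mul_le_iff₀ hIpos]
    -- the kernel is dominated by a rescaling of the integrable function `g`
    set g : ℂ → ℝ := fun v => ‖v‖ ^ j / (1 + ‖v‖ ^ 2) ^ M with hg
    have hgint : Integrable g := integrable_pow_div j M (by omega)
    have hpt : ∀ t : ℂ, t ≠ 0 → t ∈ Metric.closedBall (0 : ℂ) 4 →
        q.eval (‖t‖ ^ 2 / 16) ^ M * ‖t‖ ^ j ≤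
          (2 * (N : ℝ) ^ 2) ^ M * (4 / N) ^ j * g (((N : ℝ) / 4) • t) := fun t ht htb => by
      obtain ⟨h1, h2, -⟩ := hb _ (hu t ht) (hu1 t htb)
      have e : ‖((N : ℝ) / 4) • t‖ = N / 4 * ‖t‖ := by
        rw [norm_smul, Real.norm_of_nonneg (by positivity)]
      have h3 : q.eval (‖t‖ ^ 2 / 16) ^ M * (1 + (N / 4 * ‖t‖) ^ 2) ^ M ≤ (2 * (N : ℝ) ^ 2) ^ M := by
        rw [← mul_pow]
        refine pow_le_pow_left₀ (mul_nonneg h1 (by positivity)) (le_trans (le_of_eq ?_) h2) M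
        ring
      have h4 : (4 / (N : ℝ)) ^ j * (N / 4 * ‖t‖) ^ j = ‖t‖ ^ j := by
        rw [← mul_pow]; congr 1; field_simp
      rw [hg]
      simp only [e]
      rw [mul_assoc, ← mul_div_assoc, h4, ← mul_div_assoc, le_div_iff₀ (by positivity)]
      calc _ = q.eval (‖t‖ ^ 2 / 16) ^ M * (1 + (N / 4 * ‖t‖) ^ 2) ^ M * ‖t‖ ^ j := by ring
        _ ≤ _ := by gcongr
    have hgs : Integrable fun t : ℂ =>
        (2 * (N : ℝ) ^ 2) ^ M * (4 / N) ^ j * g (((N : ℝ) / 4) • t) :=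
      (hgint.comp_smul (by positivity)).const_mul _
    have hup : ∫ t in Metric.closedBall (0 : ℂ) 4, q.eval (‖t‖ ^ 2 / 16) ^ M * ‖t‖ ^ j ≤
        (2 * (N : ℝ) ^ 2) ^ M * (4 / N) ^ j * ((4 / N) ^ 2 * H j) := by
      calc _ ≤ ∫ t in Metric.closedBall (0 : ℂ) 4,
            (2 * (N : ℝ) ^ 2) ^ M * (4 / N) ^ j * g (((N : ℝ) / 4) • t) := by
            refine setIntegral_mono_on_ae (hint j) hgs.integrableOn measurableSet_closedBall ?_
            filter_upwards [hae] with t ht htb using hpt t ht htb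
        _ ≤ ∫ t : ℂ, (2 * (N : ℝ) ^ 2) ^ M * (4 / N) ^ j * g (((N : ℝ) / 4) • t) := by
            refine setIntegral_le_integral hgs (Filter.Eventually.of_forall fun t => ?_)
            simp only [hg, Pi.zero_apply]
            positivity
        _ = _ := by
            rw [integral_const_mul, Measure.integral_comp_smul, Complex.finrank_real_complex,
              smul_eq_mul, abs_of_nonneg (by positivity)]
            congr 2
            rw [← inv_pow, inv_div]
    have hCj : 8 ^ M * 4 ^ j * H j ≤ S + 1 := by
      have := single_le_sum (f := fun j => 8 ^ M * 4 ^ j * H j)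
        (fun i _ => mul_nonneg (by positivity) (hH0 i)) (mem_range.2 (Nat.lt_succ_of_le hj))
      rw [← hS] at this
      linarith
    refine hup.trans ?_
    calc (2 * (N : ℝ) ^ 2) ^ M * (4 / N) ^ j * ((4 / N) ^ 2 * H j)
        = ((N : ℝ) ^ 2 / 4) ^ M * (4 / N) ^ 2 * (8 ^ M * 4 ^ j * H j / N ^ j) := by
          have : (2 * (N : ℝ) ^ 2) = (N ^ 2 / 4) * 8 := by ring
          rw [this, mul_pow _ (8 : ℝ), div_pow 4 (N : ℝ) j]
          ring
      _ ≤ I * ((S + 1) / N ^ j) := by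
          refine mul_le_mul hlow ?_ ?_ hIpos.le
          · gcongr
          · have := hH0 j; positivity

/-! ### Integrals against polynomial kernels -/

open MeasureTheory in
/-- `∫ F y * ‖y - x‖ ^ (2 i)` is a polynomial in the coordinates of `x`, by expanding one factor
`‖y - x‖ ^ 2 = ‖y‖ ^ 2 - 2 Re x Re y - 2 Im x Im y + ‖x‖ ^ 2` and absorbing the functions of `y`
into `F`. -/
lemma exists_mvPolynomial_integral_pow (i : ℕ) : ∀ {F : ℂ → ℝ}, Continuous F →
    HasCompactSupport F → ∃ Q : MvPolynomial (Fin 2) ℝ, Q.totalDegree ≤ 2 * i ∧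
      ∀ x : ℂ, MvPolynomial.eval ![x.re, x.im] Q = ∫ y, F y * (‖y - x‖ ^ 2) ^ i := by
  induction i with
  | zero =>
    intro F _ _
    exact ⟨MvPolynomial.C (∫ y, F y), by simp, fun x => by simp⟩
  | succ i ih =>
    intro F hF hc
    obtain ⟨Q, hQ, hQe⟩ := ih hF hc
    obtain ⟨Q0, hQ0, hQe0⟩ := ih (hF.mul (by fun_prop : Continuous fun y : ℂ => ‖y‖ ^ 2))
      hc.mul_right
    obtain ⟨Q1, hQ1, hQe1⟩ := ih (hF.mul Complex.continuous_re) hc.mul_right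
    obtain ⟨Q2, hQ2, hQe2⟩ := ih (hF.mul Complex.continuous_im) hc.mul_right
    refine ⟨Q0 - MvPolynomial.C 2 * MvPolynomial.X 0 * Q1 - MvPolynomial.C 2 * MvPolynomial.X 1 * Q2
      + (MvPolynomial.X 0 ^ 2 + MvPolynomial.X 1 ^ 2) * Q, ?_, fun x => ?_⟩
    · have hX : ∀ j : Fin 2, (MvPolynomial.C 2 * MvPolynomial.X j :
          MvPolynomial (Fin 2) ℝ).totalDegree ≤ 1 := fun j =>
        (MvPolynomial.totalDegree_mul _ _).trans (by simp)
      have hXX : (MvPolynomial.X 0 ^ 2 + MvPolynomial.X 1 ^ 2 :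
          MvPolynomial (Fin 2) ℝ).totalDegree ≤ 2 :=
        (MvPolynomial.totalDegree_add _ _).trans (by simp)
      refine (MvPolynomial.totalDegree_add _ _).trans (max_le ?_ ?_)
      · refine (MvPolynomial.totalDegree_sub _ _).trans (max_le ?_ ?_)
        · refine (MvPolynomial.totalDegree_sub _ _).trans (max_le (by omega) ?_)
          exact (MvPolynomial.totalDegree_mul _ _).trans (by have := hX 0; omega)
        · exact (MvPolynomial.totalDegree_mul _ _).trans (by have := hX 1; omega)
      · exact (MvPolynomial.totalDegree_mul _ _).trans (by omega)
    · have hint : ∀ g : ℂ → ℝ, Continuous g →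
          Integrable fun y => F y * g y * (‖y - x‖ ^ 2) ^ i := fun g hg =>
        ((hF.mul hg).mul (by fun_prop)).integrable_of_hasCompactSupport hc.mul_right.mul_right
      have h0 := hint (fun y => ‖y‖ ^ 2) (by fun_prop)
      have h1 := (hint _ Complex.continuous_re).const_mul (2 * x.re)
      have h2 := (hint _ Complex.continuous_im).const_mul (2 * x.im)
      have h3 : Integrable fun y => (x.re ^ 2 + x.im ^ 2) * (F y * (‖y - x‖ ^ 2) ^ i) := by
        simpa using (hint (fun _ => 1) continuous_const).const_mul (x.re ^ 2 + x.im ^ 2)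
      have key : ∀ y : ℂ, F y * (‖y - x‖ ^ 2) ^ (i + 1) =
          F y * ‖y‖ ^ 2 * (‖y - x‖ ^ 2) ^ i - 2 * x.re * (F y * y.re * (‖y - x‖ ^ 2) ^ i)
          - 2 * x.im * (F y * y.im * (‖y - x‖ ^ 2) ^ i)
          + (x.re ^ 2 + x.im ^ 2) * (F y * (‖y - x‖ ^ 2) ^ i) := fun y => by
        have : ‖y - x‖ ^ 2 = ‖y‖ ^ 2 - 2 * x.re * y.re - 2 * x.im * y.im
            + (x.re ^ 2 + x.im ^ 2) := by
          simp only [Complex.sq_norm, Complex.normSq_apply, Complex.sub_re, Complex.sub_im]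
          ring
        rw [pow_succ]
        nth_rewrite 2 [this]
        ring
      simp_rw [key]
      simp only [Pi.mul_apply] at hQe0 hQe1 hQe2
      rw [integral_add ((h0.sub' h1).sub' h2) h3, integral_sub (h0.sub' h1) h2, integral_sub h0 h1,
        integral_const_mul, integral_const_mul, integral_const_mul, ← hQe, ← hQe0, ← hQe1, ← hQe2]
      simp

open MeasureTheory Polynomial in
lemma exists_mvPolynomial_integral (p : ℝ[X]) (c : ℝ) {F : ℂ → ℝ} (hF : Continuous F)
    (hc : HasCompactSupport F) : ∃ Q : MvPolynomial (Fin 2) ℝ,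
      Q.totalDegree ≤ 2 * p.natDegree ∧ ∀ x : ℂ,
        MvPolynomial.eval ![x.re, x.im] Q = ∫ y, p.eval (c * ‖y - x‖ ^ 2) * F y := by
  choose Q hQ hQe using fun i => exists_mvPolynomial_integral_pow i hF hc
  refine ⟨∑ i ∈ range (p.natDegree + 1), MvPolynomial.C (p.coeff i * c ^ i) * Q i, ?_, fun x => ?_⟩
  · refine MvPolynomial.totalDegree_finsetSum_le fun i hi => ?_
    refine (MvPolynomial.totalDegree_mul _ _).trans ?_
    have := hQ i
    have := mem_range.1 hi
    rw [MvPolynomial.totalDegree_C]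
    omega
  · rw [map_sum]
    simp only [map_mul, MvPolynomial.eval_C, hQe, ← integral_const_mul]
    rw [← integral_finsetSum]
    · congr 1 with y
      rw [eval_eq_sum_range, sum_mul]
      refine sum_congr rfl fun i _ => ?_
      rw [mul_pow]
      ring
    · intro i _
      exact (Continuous.integrable_of_hasCompactSupport (by fun_prop) hc.mul_right).const_mul _

/-! ### Higher-order smoothing -/

open MeasureTheory in
lemma hasFDerivAt_integral_smul_comp {E : Type} [NormedAddCommGroup E] [NormedSpace ℝ E]
    {w : ℂ → ℝ} (hw : Continuous w) {G : ℂ → E} (hG : ContDiff ℝ 1 G) (hc : HasCompactSupport G)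
    (a : ℝ) (x : ℂ) :
    HasFDerivAt (fun x => ∫ t in Metric.closedBall (0 : ℂ) 4, w t • G (x + a • t))
      (∫ t in Metric.closedBall (0 : ℂ) 4, w t • fderiv ℝ G (x + a • t)) x := by
  have hG' : Continuous (fderiv ℝ G) := hG.continuous_fderiv one_ne_zero
  have hGc := hG.continuous
  obtain ⟨B, hB⟩ := (hc.fderiv ℝ).exists_bound_of_continuous hG'
  have hK := isCompact_closedBall (0 : ℂ) 4
  refine hasFDerivAt_integral_of_dominated_of_fderiv_le (s := Set.univ)
    (F := fun x t => w t • G (x + a • t)) (F' := fun x t => w t • fderiv ℝ G (x + a • t))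
    (bound := fun t => ‖w t‖ * B) Filter.univ_mem (Filter.Eventually.of_forall fun y => ?_)
    ?_ ?_ ?_ ?_ ?_
  · exact (by fun_prop : Continuous fun t => w t • G (y + a • t)).aestronglyMeasurable
  · exact (by fun_prop : Continuous fun t => w t • G (x + a • t)).continuousOn.integrableOn_compact hK
  · exact (by fun_prop : Continuous fun t => w t • fderiv ℝ G (x + a • t)).aestronglyMeasurable
  · refine Filter.Eventually.of_forall fun t y _ => ?_
    rw [norm_smul]
    exact mul_le_mul_of_nonneg_left (hB _) (norm_nonneg _)
  · exact (by fun_prop : Continuous fun t => ‖w t‖ * B).continuousOn.integrableOn_compact hK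
  · refine Filter.Eventually.of_forall fun t y _ => ?_
    exact ((hasFDerivAt_comp_add_right (a • t)).2
      (hG.differentiable one_ne_zero _).hasFDerivAt).const_smul (w t)

/-- The higher-order smoothing of `G` with weight `w` on the ball of radius `4`: the average over
`t` of `G x - (-1) ^ n Δ_t ^ n G x = ∑_{1 ≤ i ≤ n} (-1) ^ (i - 1) (n choose i) G (x + i t)`. -/
noncomputable def smoothing {E : Type} [NormedAddCommGroup E] [NormedSpace ℝ E]
    (w : ℂ → ℝ) (n : ℕ) (G : ℂ → E) (x : ℂ) : E :=
  ∑ j ∈ range n, ((-1 : ℝ) ^ j * n.choose (j + 1)) •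
    ∫ t in Metric.closedBall (0 : ℂ) 4, w t • G (x + ((j : ℝ) + 1) • t)

lemma hasFDerivAt_smoothing {E : Type} [NormedAddCommGroup E] [NormedSpace ℝ E]
    {w : ℂ → ℝ} (hw : Continuous w) {G : ℂ → E} (hG : ContDiff ℝ 1 G) (hc : HasCompactSupport G)
    (n : ℕ) (x : ℂ) :
    HasFDerivAt (smoothing w n G) (smoothing w n (fderiv ℝ G) x) x :=
  HasFDerivAt.fun_sum fun j _ =>
    (hasFDerivAt_integral_smul_comp hw hG hc ((j : ℝ) + 1) x).const_smul _

open MeasureTheory in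
lemma sub_smoothing {E : Type} [NormedAddCommGroup E] [NormedSpace ℝ E] [CompleteSpace E]
    {w : ℂ → ℝ} (hw : Continuous w) (hw1 : ∫ t in Metric.closedBall (0 : ℂ) 4, w t = 1)
    {G : ℂ → E} (hG : Continuous G) (n : ℕ) (x : ℂ) :
    G x - smoothing w n G x =
      (-1 : ℝ) ^ n • ∫ t in Metric.closedBall (0 : ℂ) 4, w t • (fwdDiff t)^[n] G x := by
  have hterm : ∀ t : ℂ, w t • (fwdDiff t)^[n] G x = ∑ k ∈ range (n + 1),
      ((-1 : ℝ) ^ (n - k) * n.choose k) • (w t • G (x + (k : ℝ) • t)) := fun t => by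
    rw [fwdDiff_iter_eq_sum_shift, smul_sum]
    refine sum_congr rfl fun k _ => ?_
    rw [smul_comm, ← Int.cast_smul_eq_zsmul ℝ, Nat.cast_smul_eq_nsmul]
    push_cast
    rfl
  simp_rw [hterm]
  rw [integral_finsetSum, smul_sum, sum_range_succ', smoothing]
  · simp only [integral_smul]
    simp only [smul_smul]
    have h0 : ∫ t in Metric.closedBall (0 : ℂ) 4, w t • G (x + ((0 : ℕ) : ℝ) • t) = G x := by
      simp only [Nat.cast_zero, zero_smul, add_zero]
      rw [integral_smul_const, hw1, one_smul]
    rw [h0, Nat.sub_zero, Nat.choose_zero_right, Nat.cast_one, mul_one, ← mul_pow,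
      neg_one_mul, neg_neg, one_pow, one_smul, sub_eq_iff_eq_add, add_right_comm,
      ← sum_add_distrib, sum_eq_zero, zero_add]
    intro j hj
    obtain ⟨r, rfl⟩ := Nat.exists_eq_add_of_le (Nat.succ_le_of_lt (mem_range.1 hj))
    have hs : (-1 : ℝ) ^ (j.succ + r) * (-1) ^ (j.succ + r - (j + 1)) = -(-1) ^ j := by
      rw [Nat.succ_eq_add_one, Nat.add_sub_cancel_left, pow_add, mul_assoc, ← mul_pow]
      simp [pow_succ]
    push_cast
    rw [← mul_assoc, hs, ← add_smul]
    simp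
  · intro k _
    exact ((by fun_prop : Continuous fun t : ℂ => w t • G (x + (k : ℝ) • t)).continuousOn
      |>.integrableOn_compact (isCompact_closedBall 0 4)).smul _

open MeasureTheory in
/-- Smoothing a `C^m` function with weights whose `j`-th moments are at most `K / N ^ j` leaves an
error `o(N ^ (-m))`, uniformly on the plane. -/
lemma norm_sub_smoothing_le {E : Type} [NormedAddCommGroup E] [NormedSpace ℝ E] [CompleteSpace E]
    {m : ℕ} {G : ℂ → E} (hG : ContDiff ℝ m G) (hc : HasCompactSupport G) (K : ℝ) (hK : 0 < K)
    (w : ℕ → ℂ → ℝ) (hw : ∀ N ≥ 1, Continuous (w N)) (hw0 : ∀ N ≥ 1, ∀ t, 0 ≤ w N t)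
    (hw1 : ∀ N ≥ 1, ∫ t in Metric.closedBall (0 : ℂ) 4, w N t = 1)
    (hwK : ∀ N ≥ 1, ∀ j ≤ m + 1,
      ∫ t in Metric.closedBall (0 : ℂ) 4, w N t * ‖t‖ ^ j ≤ K / (N : ℝ) ^ j)
    (ε : ℝ) (hε : 0 < ε) :
    ∃ N₀ ≥ 1, ∀ N ≥ N₀, ∀ x, ‖G x - smoothing (w N) (m + 1) G x‖ ≤ ε / (N : ℝ) ^ m := by
  obtain ⟨C, hC, hb⟩ := norm_fwdDiff_iter_le m hG hc (ε / (2 * K)) (by positivity)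
  obtain ⟨N₁, hN₁⟩ := exists_nat_ge (2 * C * K / ε)
  refine ⟨max N₁ 1, le_max_right _ _, fun N hN x => ?_⟩
  have hN1 : 1 ≤ N := (le_max_right _ _).trans hN
  have hNR : 2 * C * K / ε ≤ N := hN₁.trans (by exact_mod_cast (le_max_left _ _).trans hN)
  have hN0 : (0 : ℝ) < N := by exact_mod_cast hN1
  have hwc := hw N hN1
  have hint : ∀ j : ℕ, IntegrableOn (fun t : ℂ => w N t * ‖t‖ ^ j) (Metric.closedBall 0 4) :=
    fun j => (by fun_prop : Continuous fun t : ℂ => w N t * ‖t‖ ^ j).continuousOn.integrableOn_compact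
      (isCompact_closedBall 0 4)
  rw [sub_smoothing hwc (hw1 N hN1) hG.continuous, norm_smul, norm_pow, norm_neg, norm_one,
    one_pow, one_mul]
  have h1 : ‖∫ t in Metric.closedBall (0 : ℂ) 4, w N t • (fwdDiff t)^[m + 1] G x‖ ≤
      ∫ t in Metric.closedBall (0 : ℂ) 4,
        (ε / (2 * K) * (w N t * ‖t‖ ^ m) + C * (w N t * ‖t‖ ^ (m + 1))) := by
    refine norm_integral_le_of_norm_le (((hint m).const_mul _).add ((hint (m + 1)).const_mul _))
      (Filter.Eventually.of_forall fun t => ?_)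
    rw [norm_smul, Real.norm_of_nonneg (hw0 N hN1 t)]
    refine (mul_le_mul_of_nonneg_left (hb t x) (hw0 N hN1 t)).trans (le_of_eq ?_)
    ring
  rw [integral_add ((hint m).const_mul _) ((hint (m + 1)).const_mul _), integral_const_mul,
    integral_const_mul] at h1
  refine h1.trans ?_
  have h2 := mul_le_mul_of_nonneg_left (hwK N hN1 m (by omega))
    (by positivity : 0 ≤ ε / (2 * K))
  have h3 := mul_le_mul_of_nonneg_left (hwK N hN1 (m + 1) le_rfl) hC
  have h4 : C * (K / (N : ℝ) ^ (m + 1)) ≤ ε / 2 / N ^ m := by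
    rw [div_le_iff₀ hε] at hNR
    rw [pow_succ, ← mul_div_assoc, div_le_div_iff₀ (by positivity) (by positivity)]
    have : C * K ≤ ε / 2 * N := by linarith
    calc C * K * N ^ m ≤ ε / 2 * N * N ^ m := by gcongr
      _ = _ := by ring
  have h5 : ε / (2 * K) * (K / (N : ℝ) ^ m) = ε / 2 / N ^ m := by field_simp
  have h6 : ε / 2 / (N : ℝ) ^ m + ε / 2 / N ^ m = ε / N ^ m := by ring
  linarith

open MeasureTheory Polynomial in
/-- If `F` vanishes outside the disk of radius `2`, its smoothing with a polynomial weight agrees on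
that disk with a polynomial, although the weight is truncated to the ball of radius `4`. -/
lemma exists_mvPolynomial_smoothing (p : ℝ[X]) (n : ℕ) {F : ℂ → ℝ} (hF : Continuous F)
    (hs : ∀ y, 2 ≤ ‖y‖ → F y = 0) : ∃ Q : MvPolynomial (Fin 2) ℝ,
      Q.totalDegree ≤ 2 * p.natDegree ∧ ∀ x : ℂ, ‖x‖ ≤ 2 →
        MvPolynomial.eval ![x.re, x.im] Q = smoothing (fun t => p.eval (‖t‖ ^ 2 / 16)) n F x := by
  have hc : HasCompactSupport F := HasCompactSupport.intro (isCompact_closedBall (0 : ℂ) 2)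
    fun y hy => hs y (by rw [mem_closedBall_zero_iff] at hy; linarith)
  choose Q hQ hQe using fun j : ℕ =>
    exists_mvPolynomial_integral p (((j : ℝ) + 1) ^ 2 * 16)⁻¹ hF hc
  refine ⟨∑ j ∈ range n, MvPolynomial.C ((-1 : ℝ) ^ j * n.choose (j + 1) * (((j : ℝ) + 1) ^ 2)⁻¹)
    * Q j, ?_, fun x hx => ?_⟩
  · refine MvPolynomial.totalDegree_finsetSum_le fun j _ => ?_
    refine (MvPolynomial.totalDegree_mul _ _).trans ?_
    rw [MvPolynomial.totalDegree_C, zero_add]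
    exact hQ j
  · rw [map_sum, smoothing]
    refine sum_congr rfl fun j _ => ?_
    rw [map_mul, MvPolynomial.eval_C, hQe, mul_assoc, smul_eq_mul]
    congr 1
    have hj : (0 : ℝ) < j + 1 := by positivity
    -- for `‖t‖ > 4` the point `x + (j + 1) t` is outside the support of `F`
    rw [setIntegral_eq_integral_of_forall_compl_eq_zero]
    · set h : ℂ → ℝ := fun y => p.eval ((((j : ℝ) + 1) ^ 2 * 16)⁻¹ * ‖y - x‖ ^ 2) * F y with hh
      have e : ∀ t : ℂ, p.eval (‖t‖ ^ 2 / 16) • F (x + ((j : ℝ) + 1) • t) =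
          h (x + ((j : ℝ) + 1) • t) := fun t => by
        simp only [hh, add_sub_cancel_left, smul_eq_mul]
        rw [norm_smul, Real.norm_of_nonneg hj.le]
        congr 2
        field_simp
      simp_rw [e]
      rw [Measure.integral_comp_smul volume (fun y => h (x + y)) ((j : ℝ) + 1),
        integral_add_left_eq_self h x, Complex.finrank_real_complex, smul_eq_mul,
        abs_of_nonneg (by positivity)]
    · intro t ht
      rw [hs, smul_zero]
      rw [mem_closedBall_zero_iff, not_le] at ht
      have h1 : ‖((j : ℝ) + 1) • t‖ = (j + 1) * ‖t‖ := by
        rw [norm_smul, Real.norm_of_nonneg hj.le]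
      have h2 : ‖((j : ℝ) + 1) • t‖ ≤ ‖x + ((j : ℝ) + 1) • t‖ + ‖x‖ := by
        simpa using norm_sub_le (x + ((j : ℝ) + 1) • t) x
      have h3 : 4 ≤ (j + 1) * ‖t‖ := by nlinarith [(Nat.cast_nonneg j : (0 : ℝ) ≤ j)]
      linarith

/-! ### Approximation on the disk -/

lemma exists_extension {k : ℕ} {f : ℂ → ℝ} {U : Set ℂ} (hU : IsOpen U)
    (hDU : Metric.closedBall (0 : ℂ) 1 ⊆ U) (hf : ContDiffOn ℝ k f U) :
    ∃ F : ℂ → ℝ, ContDiff ℝ k F ∧ (∀ y, 2 ≤ ‖y‖ → F y = 0) ∧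
      ∀ x ∈ Metric.closedBall (0 : ℂ) 1, f =ᶠ[nhds x] F := by
  obtain ⟨δ, hδ, hδU⟩ := (isCompact_closedBall (0 : ℂ) 1).exists_cthickening_subset_open hU hDU
  rw [cthickening_closedBall hδ.le zero_le_one] at hδU
  obtain ⟨η, hη0, hη1, hηδ⟩ : ∃ η, 0 < η ∧ η < 1 ∧ η ≤ δ :=
    ⟨min δ (1 / 2), by positivity, by linarith [min_le_right δ (1 / 2)], min_le_left _ _⟩
  let χ : ContDiffBump (0 : ℂ) := ⟨1 + η / 2, 1 + η, by linarith, by linarith⟩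
  have hsupp : tsupport (χ : ℂ → ℝ) ⊆ U := by
    rw [χ.tsupport_eq]
    exact (Metric.closedBall_subset_closedBall (by simp only [χ]; linarith)).trans hδU
  refine ⟨fun y => χ y * f y, ?_, fun y hy => ?_, fun x hx => ?_⟩
  · refine contDiff_iff_contDiffAt.2 fun y => ?_
    by_cases hy : y ∈ tsupport (χ : ℂ → ℝ)
    · exact χ.contDiffAt.mul (hf.contDiffAt (hU.mem_nhds (hsupp hy)))
    · refine contDiffAt_const (c := (0 : ℝ)) |>.congr_of_eventuallyEq ?_
      filter_upwards [notMem_tsupport_iff_eventuallyEq.1 hy] with z hz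
      rw [hz, Pi.zero_apply, zero_mul]
  · dsimp only
    rw [χ.zero_of_le_dist (by simp only [dist_zero_right, χ]; linarith), zero_mul]
  · have hx' : x ∈ Metric.ball (0 : ℂ) (1 + η / 2) := by
      rw [mem_ball_zero_iff]; rw [mem_closedBall_zero_iff] at hx; linarith
    filter_upwards [Metric.isOpen_ball.mem_nhds hx'] with y hy
    rw [χ.one_of_mem_closedBall (Metric.ball_subset_closedBall hy), one_mul]

/-- The approximation theorem with the degree running through the multiples of some `M`. -/
lemma exists_good_polynomials {m : ℕ} {f : ℂ → ℝ} {U : Set ℂ} (hU : IsOpen U)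
    (hDU : Metric.closedBall (0 : ℂ) 1 ⊆ U) (hf : ContDiffOn ℝ (m + 1 : ℕ) f U) :
    ∃ M > 0, ∃ Q : ℕ → MvPolynomial (Fin 2) ℝ, (∀ N, (Q N).totalDegree ≤ M * N) ∧
      ∀ ε > (0 : ℝ), ∃ N₀ ≥ 1, ∀ N ≥ N₀, ∀ x ∈ Metric.closedBall (0 : ℂ) 1,
        |f x - MvPolynomial.eval ![x.re, x.im] (Q N)| ≤ ε / (N : ℝ) ^ m ∧
        ‖fderiv ℝ f x - fderiv ℝ (fun y : ℂ => MvPolynomial.eval ![y.re, y.im] (Q N)) x‖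
          ≤ ε / (N : ℝ) ^ m := by
  obtain ⟨F, hF, hs, hfF⟩ := exists_extension hU hDU hf
  have hc : HasCompactSupport F := HasCompactSupport.intro (isCompact_closedBall (0 : ℂ) 2)
    fun y hy => hs y (by rw [mem_closedBall_zero_iff] at hy; linarith)
  obtain ⟨K, hK, M, hM, hker⟩ := exists_kernel (m + 1)
  choose! p hp hp0 hp1 hpK using hker
  choose Q hQ hQe using fun N => exists_mvPolynomial_smoothing (p N) (m + 1) hF.continuous hs
  set w : ℕ → ℂ → ℝ := fun N t => (p N).eval (‖t‖ ^ 2 / 16) with hw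
  have hwc : ∀ N, Continuous (w N) := fun N =>
    (p N).continuous.comp (by fun_prop : Continuous fun t : ℂ => ‖t‖ ^ 2 / 16)
  have hF1 : ContDiff ℝ 1 F := hF.of_le (by norm_cast; omega)
  have hFm : ContDiff ℝ m F := hF.of_le (by norm_cast; omega)
  have hF' : ContDiff ℝ m (fderiv ℝ F) := hF.fderiv_right (by norm_cast)
  refine ⟨2 * M, by omega, fun N => if N = 0 then 0 else Q N, fun N => ?_, fun ε hε => ?_⟩
  · dsimp only
    split_ifs with h
    · simp
    · have := hp N (by omega)
      have := hQ N
      rw [mul_assoc]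
      omega
  · obtain ⟨N₁, hN₁, h₁⟩ := norm_sub_smoothing_le hFm hc K hK w (fun N _ => hwc N)
      (fun N hN t => hp0 N hN _) hp1 hpK ε hε
    obtain ⟨N₂, hN₂, h₂⟩ := norm_sub_smoothing_le hF' (hc.fderiv ℝ) K hK w (fun N _ => hwc N)
      (fun N hN t => hp0 N hN _) hp1 hpK ε hε
    refine ⟨max N₁ N₂, hN₁.trans (le_max_left _ _), fun N hN x hx => ?_⟩
    have hN1 : N₁ ≤ N := (le_max_left _ _).trans hN
    have hN2 : N₂ ≤ N := (le_max_right _ _).trans hN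
    have hx1 : ‖x‖ ≤ 1 := mem_closedBall_zero_iff.1 hx
    simp only [if_neg (by omega : N ≠ 0)]
    have hev : (fun y : ℂ => MvPolynomial.eval ![y.re, y.im] (Q N)) =ᶠ[nhds x]
        smoothing (w N) (m + 1) F := by
      have hx' : x ∈ Metric.ball (0 : ℂ) 2 := by rw [mem_ball_zero_iff]; linarith
      filter_upwards [Metric.isOpen_ball.mem_nhds hx'] with y hy
      exact hQe N y (mem_ball_zero_iff.1 hy).le
    rw [hev.fderiv_eq, (hfF x hx).fderiv_eq, (hfF x hx).self_of_nhds, hQe N x (by linarith),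
      (hasFDerivAt_smoothing (hwc N) hF1 hc (m + 1) x).fderiv]
    exact ⟨h₁ N hN1 x, h₂ N hN2 x⟩

theorem stmt7 (k : ℕ) (hk : 1 ≤ k) (f : ℂ → ℝ)
    (U : Set ℂ) (hU : IsOpen U) (hDU : Metric.closedBall (0 : ℂ) 1 ⊆ U)
    (hf : ContDiffOn ℝ k f U) :
    ∃ Q : ℕ → MvPolynomial (Fin 2) ℝ,
      (∀ d : ℕ, (Q d).totalDegree ≤ d) ∧
      Filter.Tendsto
        (fun d : ℕ => (d : ℝ) ^ (k - 1) *
          ⨆ x : Metric.closedBall (0 : ℂ) 1,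
            |f (x : ℂ) - MvPolynomial.eval ![(x : ℂ).re, (x : ℂ).im] (Q d)|)
        Filter.atTop (nhds 0) ∧
      Filter.Tendsto
        (fun d : ℕ => (d : ℝ) ^ (k - 1) *
          ⨆ x : Metric.closedBall (0 : ℂ) 1,
            ‖fderiv ℝ f (x : ℂ) -
              fderiv ℝ (fun y : ℂ => MvPolynomial.eval ![y.re, y.im] (Q d)) (x : ℂ)‖)
        Filter.atTop (nhds 0) := by
  obtain ⟨m, rfl⟩ : ∃ m, k = m + 1 := ⟨k - 1, by omega⟩
  obtain ⟨M, hM, Q, hQ, hb⟩ := exists_good_polynomials hU hDU hf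
  rw [Nat.add_sub_cancel]
  -- a sup norm bounded by `ε / N ^ m` with `N = d / M` is `O(ε / d ^ m)`, since `d ≤ 2 M N`
  have main : ∀ e : ℕ → Metric.closedBall (0 : ℂ) 1 → ℝ, (∀ N x, 0 ≤ e N x) →
      (∀ ε > (0 : ℝ), ∃ N₀ ≥ 1, ∀ N ≥ N₀, ∀ x, e N x ≤ ε / (N : ℝ) ^ m) →
      Filter.Tendsto (fun d : ℕ => (d : ℝ) ^ m * ⨆ x, e (d / M) x) Filter.atTop (nhds 0) := by
    intro e he0 he
    rw [Metric.tendsto_atTop]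
    intro ε hε
    have hM' : (0 : ℝ) < M := by exact_mod_cast hM
    obtain ⟨N₀, hN₀, h⟩ := he (ε / 2 / (2 * M) ^ m) (by positivity)
    refine ⟨M * N₀, fun d hd => ?_⟩
    have hN : N₀ ≤ d / M := (Nat.le_div_iff_mul_le hM).2 (by rwa [mul_comm])
    have hd2 : d ≤ 2 * M * (d / M) := by
      have h1 := Nat.lt_mul_div_succ d hM
      have h2 : M * 1 ≤ M * (d / M) := Nat.mul_le_mul_left _ (hN₀.trans hN)
      rw [mul_assoc, two_mul]
      rw [mul_add] at h1
      omega
    set N := d / M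
    have hNpos : (0 : ℝ) < N := by exact_mod_cast hN₀.trans hN
    have hsup : ⨆ x, e N x ≤ ε / 2 / (2 * M) ^ m / (N : ℝ) ^ m :=
      Real.iSup_le (h N hN) (by positivity)
    have hsup0 : 0 ≤ ⨆ x, e N x := Real.iSup_nonneg (he0 N)
    have hd3 : (d : ℝ) ≤ 2 * M * N := by exact_mod_cast hd2
    rw [dist_zero_right, Real.norm_of_nonneg (by positivity)]
    calc (d : ℝ) ^ m * ⨆ x, e N x
        ≤ (2 * M * N) ^ m * (ε / 2 / (2 * M) ^ m / (N : ℝ) ^ m) := by gcongr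
      _ = ε / 2 := by rw [mul_pow (2 * (M : ℝ))]; field_simp
      _ < ε := by linarith
  refine ⟨fun d => Q (d / M), fun d => (hQ _).trans (Nat.mul_div_le d M),
    main (fun N x => |f (x : ℂ) - MvPolynomial.eval ![(x : ℂ).re, (x : ℂ).im] (Q N)|)
      (fun N x => abs_nonneg _) fun ε hε => ?_,
    main (fun N x => ‖fderiv ℝ f (x : ℂ) -
        fderiv ℝ (fun y : ℂ => MvPolynomial.eval ![y.re, y.im] (Q N)) (x : ℂ)‖)
      (fun N x => norm_nonneg _) fun ε hε => ?_⟩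
  · obtain ⟨N₀, h₀, h⟩ := hb ε hε
    exact ⟨N₀, h₀, fun N hN x => (h N hN x x.2).1⟩
  · obtain ⟨N₀, h₀, h⟩ := hb ε hε
    exact ⟨N₀, h₀, fun N hN x => (h N hN x x.2).2⟩
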